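/- Let M be the 30×30 intersection matrix of the curves E_{ij}^β (diagonal entries −3; entry 1 between ({i,j},β) and ({s,t},γ) when {i,j} ∩ {s,t} = ∅; 0 otherwise). Remove the 5 rows and columns corresponding to the curves E₁₃^α, E₁₅^α, E₂₄^α, E₃₄^α, E₄₅^α (i.e., the indices ({1,3},1), ({1,5},1), ({2,4},1), ({3,4},1), ({4,5},1)). Then the resulting 25×25 matrix has determinant equal to 3²⁰ in absolute value. -/

import Mathlib

open Finset

/-- Index set for the 30 elliptic curves `E_{ij}^β`: a pair `i < j` in `Fin 5`
together with `β ∈ μ₃` encoded as `ZMod 3`. -/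
abbrev Idx : Type := {p : Fin 5 × Fin 5 // p.1 < p.2} × ZMod 3

/-- The 30×30 intersection matrix of the curves `E_{ij}^β`: `−3` on the diagonal,
`1` between indices with disjoint pairs `{i,j} ∩ {s,t} = ∅`, and `0` otherwise. -/
def M : Matrix Idx Idx ℚ := fun x y =>
  if x = y then -3
  else if x.1.1.1 ≠ y.1.1.1 ∧ x.1.1.1 ≠ y.1.1.2 ∧ x.1.1.2 ≠ y.1.1.1 ∧ x.1.1.2 ≠ y.1.1.2
  then 1 else 0

/-- The five removed indices: `({1,3},α), ({1,5},α), ({2,4},α), ({3,4},α), ({4,5},α)`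
(0-based pairs, with `α` corresponding to exponent `1` in `ZMod 3`). -/
def removed : Finset Idx :=
  { ⟨⟨(0, 2), by decide⟩, 1⟩, ⟨⟨(0, 4), by decide⟩, 1⟩, ⟨⟨(1, 3), by decide⟩, 1⟩,
    ⟨⟨(2, 3), by decide⟩, 1⟩, ⟨⟨(3, 4), by decide⟩, 1⟩ }

open Matrix Polynomial

/-!
Write `A` for the adjacency matrix of the Petersen graph, that is, of disjointness of pairs. Then
`M = A ⊗ J₃ - 3`, and `A = 1 - Bᵀ (1 - J₅ / 4) B`, where `B` is the vertex-edge incidence matrix of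
the complete graph `K₅` and `Jₙ` is the all-ones matrix of size `n`.

Since `charpoly (X Y)` and `charpoly (Y X)` agree up to a power of the variable, deleting curves
from `M` leaves, up to sign and a power of `3`, the determinant of the 10×10 matrix `3 - A D`, where
the diagonal matrix `D` counts the curves kept over each pair. As
`3 - A D = (3 - D) + Bᵀ (1 - J₅ / 4) B D` and the second summand factors through a space of
dimension five, five zeros on the diagonal of `3 - D` split the determinant into a product: the
pairs all of whose curves are kept contribute `det (B restricted to them) ^ 2`. These five pairs
form a spanning subgraph of `K₅` whose only cycle is a triangle, so this restricted determinant is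
`±2`.
-/

section General

variable {R m ι κ : Type*} [CommRing R] [Fintype m] [DecidableEq m]
  [Fintype ι] [DecidableEq ι] [Fintype κ] [DecidableEq κ]

theorem X_pow_mul_charpoly_submatrix (A : Matrix ι ι R) (π : κ → ι) :
    X ^ Fintype.card ι * (A.submatrix π π).charpoly =
      X ^ Fintype.card κ * (A * diagonal fun i => (#{k | π k = i} : R)).charpoly := by
  let P : Matrix κ ι R := (1 : Matrix ι ι R).submatrix π id
  have h_submatrix : A.submatrix π π = P * (A * Pᵀ) := by
    ext k l
    simp [P, mul_apply, one_apply]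
  have h_gram : Pᵀ * P = diagonal fun i => (#{k | π k = i} : R) := by
    ext i j
    simp only [P, mul_apply, transpose_apply, submatrix_apply, id, one_apply, diagonal_apply,
      ite_mul, one_mul, zero_mul, ← ite_and]
    by_cases h_eq : i = j
    · subst h_eq
      simp
    · have h_disjoint (k : κ) : ¬(π k = i ∧ π k = j) := by grind
      simp [h_disjoint, h_eq]
  rw [h_submatrix, charpoly_mul_comm', Matrix.mul_assoc, h_gram]

theorem pow_mul_det_scalar_sub_submatrix (A : Matrix ι ι R) (π : κ → ι) (t : R) :
    t ^ Fintype.card ι * (scalar κ t - A.submatrix π π).det =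
      t ^ Fintype.card κ *
        (scalar ι t - A * diagonal fun i => (#{k | π k = i} : R)).det := by
  simpa only [eval_mul, eval_pow, eval_X, eval_charpoly] using
    congrArg (eval t) (X_pow_mul_charpoly_submatrix A π)

-- On splitting off the image of `τ`, the matrix is a product of two block triangular ones.
theorem det_diagonal_add_mul (d : ι → R) (L : Matrix ι m R) (C : Matrix m ι R) (τ : m ↪ ι)
    (hd : ∀ j, d (τ j) = 0) :
    (diagonal d + L * C).det =
      (L.submatrix τ id).det * (C.submatrix id τ).det * ∏ i ∈ (univ.map τ)ᶜ, d i := by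
  classical
  let e : m ⊕ {i // i ∉ Set.range τ} ≃ ι :=
    ((Equiv.ofInjective τ τ.injective).sumCongr (Equiv.refl _)).trans
      (Equiv.sumCompl (· ∈ Set.range τ))
  have h_factor : (diagonal d + L * C).submatrix e e =
      fromBlocks (L.submatrix τ id) 0 (L.submatrix (e ∘ Sum.inr) id) 1 *
        fromBlocks (C.submatrix id τ) (C.submatrix id (e ∘ Sum.inr)) 0
          (diagonal (d ∘ e ∘ Sum.inr)) := by
    rw [fromBlocks_multiply]
    ext (i | i) (j | j)
    · simp [e, hd, mul_apply, diagonal_apply]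
    · have h_ne : τ i ≠ j := fun h => j.2 ⟨i, h⟩
      simp [e, h_ne, mul_apply]
    · have h_ne : i ≠ τ j := fun h => i.2 ⟨j, h.symm⟩
      simp [e, h_ne, mul_apply]
    · simp [e, mul_apply, diagonal_apply, Subtype.ext_iff, add_comm]
  have h_prod : ∏ i ∈ (univ.map τ)ᶜ, d i = ∏ i : {i // i ∉ Set.range τ}, d i := by
    refine prod_subtype _ (fun i => ?_) d
    simp
  rw [← det_submatrix_equiv_self e, h_factor, det_mul, det_fromBlocks_zero₁₂,
    det_fromBlocks_zero₂₁, det_one, mul_one, det_diagonal, h_prod, mul_assoc]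
  rfl

theorem det_one_sub_vecMulVec (u v : m → R) : (1 - vecMulVec u v).det = 1 - v ⬝ᵥ u := by
  rw [sub_eq_add_neg, ← neg_vecMulVec, vecMulVec_eq Unit,
    det_one_add_replicateCol_mul_replicateRow, dotProduct_neg, sub_eq_add_neg]

theorem det_one_sub_smul_vecMulVec_one (c : R) :
    (1 - c • vecMulVec 1 1 : Matrix m m R).det = 1 - c * Fintype.card m := by
  rw [← smul_vecMulVec, det_one_sub_vecMulVec, dotProduct_smul, one_dotProduct_one, smul_eq_mul]

end General

/-- The edges of the complete graph on `V`, each encoded by its endpoints in increasing order. -/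
abbrev Edge (V : Type*) [LT V] : Type _ := {p : V × V // p.1 < p.2}

/-- The vertex-edge incidence matrix of the complete graph on `V`. The sum of the two indicators
takes only the values `0` and `1` because the endpoints of an edge are distinct. -/
def edgeIncMatrix (V R : Type*) [LinearOrder V] [Semiring R] : Matrix V (Edge V) R :=
  of fun v e => (if v = e.1.1 then 1 else 0) + if v = e.1.2 then 1 else 0

/-- The adjacency matrix of the Kneser graph on the two-element subsets of `V`, in which disjoint
subsets are adjacent; for five vertices this is the Petersen graph. -/
def kneserMatrix (V R : Type*) [LinearOrder V] [Zero R] [One R] : Matrix (Edge V) (Edge V) R :=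
  of fun e f =>
    if e.1.1 ≠ f.1.1 ∧ e.1.1 ≠ f.1.2 ∧ e.1.2 ≠ f.1.1 ∧ e.1.2 ≠ f.1.2 then 1 else 0

section Kneser

variable (V R K : Type*) [LinearOrder V] [Fintype V] [Field K]

theorem one_vecMul_edgeIncMatrix [Semiring R] : 1 ᵥ* edgeIncMatrix V R = 2 := by
  ext e
  simp [edgeIncMatrix, vecMul, dotProduct, sum_add_distrib, one_add_one_eq_two]

theorem edgeIncMatrix_transpose_mul_self_apply [Semiring R] (e f : Edge V) :
    ((edgeIncMatrix V R)ᵀ * edgeIncMatrix V R) e f =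
      (if e.1.1 = f.1.1 then 1 else 0) + (if e.1.2 = f.1.1 then 1 else 0) +
        ((if e.1.1 = f.1.2 then 1 else 0) + if e.1.2 = f.1.2 then 1 else 0) := by
  simp [edgeIncMatrix, mul_apply, mul_add, sum_add_distrib, eq_comm]

theorem kneserMatrix_eq_one_add_allOnes_sub [Ring R] :
    kneserMatrix V R = 1 + vecMulVec 1 1 - (edgeIncMatrix V R)ᵀ * edgeIncMatrix V R := by
  ext ⟨⟨a, b⟩, hab : a < b⟩ ⟨⟨c, d⟩, hcd : c < d⟩
  rw [Matrix.sub_apply, edgeIncMatrix_transpose_mul_self_apply]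
  simp only [kneserMatrix, of_apply, Matrix.add_apply, one_apply, vecMulVec_apply, Pi.one_apply,
    Subtype.mk.injEq, Prod.mk.injEq]
  split_ifs <;> grind

theorem kneserMatrix_eq_one_sub_mul [NeZero (4 : K)] :
    kneserMatrix V K =
      1 - (edgeIncMatrix V K)ᵀ *
        ((1 - (4⁻¹ : K) • vecMulVec 1 1 : Matrix V V K) * edgeIncMatrix V K) := by
  have h_allOnes : (edgeIncMatrix V K)ᵀ * ((vecMulVec 1 1 : Matrix V V K) * edgeIncMatrix V K) =
      (4 : K) • vecMulVec 1 1 := by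
    rw [vecMulVec_mul, mul_vecMulVec, mulVec_transpose, one_vecMul_edgeIncMatrix]
    ext e f
    norm_num [vecMulVec_apply]
  rw [kneserMatrix_eq_one_add_allOnes_sub, Matrix.sub_mul, Matrix.mul_sub,
    Matrix.one_mul, Matrix.smul_mul, Matrix.mul_smul, h_allOnes, inv_smul_smul₀ four_ne_zero]
  abel

theorem pow_mul_det_scalar_sub_kneserMatrix_submatrix [NeZero (4 : K)] {κ : Type*} [Fintype κ]
    [DecidableEq κ] (π : κ → Edge V) (τ : V ↪ Edge V) (q : K)
    (hτ : ∀ v, (#{k | π k = τ v} : K) = q) :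
    q ^ Fintype.card (Edge V) * (scalar κ q - (kneserMatrix V K).submatrix π π).det =
      q ^ (Fintype.card κ + Fintype.card V) * (1 - Fintype.card V / 4) *
        ((edgeIncMatrix V K).submatrix id τ).det ^ 2 *
        ∏ e ∈ (univ.map τ)ᶜ, (q - #{k | π k = e}) := by
  set B := edgeIncMatrix V K
  let C : Matrix V V K := 1 - (4⁻¹ : K) • vecMulVec 1 1
  let D : Matrix (Edge V) (Edge V) K := diagonal fun e => (#{k | π k = e} : K)
  have h_split : scalar (Edge V) q - kneserMatrix V K * D =
      diagonal (fun e => q - (#{k | π k = e} : K)) + Bᵀ * (C * B * D) := by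
    rw [kneserMatrix_eq_one_sub_mul, ← diagonal_sub, scalar_apply, Matrix.sub_mul,
      Matrix.one_mul]
    simp only [B, C, D, Matrix.mul_assoc]
    abel
  have h_columns : (C * B * D).submatrix id τ = q • (C * B.submatrix id τ) := by
    ext v w
    rw [submatrix_apply, mul_diagonal, hτ, mul_comm]
    rfl
  have h_det : C.det = 1 - Fintype.card V / 4 :=
    (det_one_sub_smul_vecMulVec_one 4⁻¹).trans (by rw [div_eq_inv_mul])
  rw [pow_mul_det_scalar_sub_submatrix, h_split,
    det_diagonal_add_mul _ _ _ τ fun v => sub_eq_zero.2 (hτ v).symm, h_columns, det_smul, det_mul,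
    h_det, ← transpose_submatrix, det_transpose]
  ring

end Kneser

theorem M_submatrix_eq_neg_scalar_sub {κ : Type*} [Fintype κ] [DecidableEq κ] {f : κ → Idx}
    (hf : f.Injective) :
    M.submatrix f f = -(scalar κ 3 -
      (kneserMatrix (Fin 5) ℚ).submatrix (fun k => (f k).1) fun k => (f k).1) := by
  ext k l
  obtain rfl | h_ne := eq_or_ne k l
  · simp [M, kneserMatrix]
  · simp [M, kneserMatrix, h_ne, hf.eq_iff]

/-- The five edges of `K₅` all of whose curves are kept, `12`, `23`, `35`, `14`, `25` in the
numbering of the curves. They form the triangle `235` with the path `2 - 1 - 4` attached, and are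
listed so that the `v`-th edge is incident to the `v`-th vertex. -/
def fullEdge : Fin 5 ↪ Edge (Fin 5) :=
  ⟨![⟨(0, 1), by decide⟩, ⟨(1, 2), by decide⟩, ⟨(2, 4), by decide⟩, ⟨(0, 3), by decide⟩,
    ⟨(1, 4), by decide⟩], by decide⟩

theorem edgeIncMatrix_submatrix_fullEdge :
    (edgeIncMatrix (Fin 5) ℚ).submatrix id fullEdge =
      !![1, 0, 0, 1, 0;
         1, 1, 0, 0, 1;
         0, 1, 1, 0, 0;
         0, 0, 0, 1, 0;
         0, 0, 1, 0, 1] := by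
  decide +kernel

theorem det_edgeIncMatrix_submatrix_fullEdge :
    ((edgeIncMatrix (Fin 5) ℚ).submatrix id fullEdge).det = 2 := by
  let B : Matrix (Fin 5) (Fin 5) ℚ :=
    !![1, 0, 0, 1, 0; 1, 1, 0, 0, 1; 0, 1, 1, 0, 0; 0, 0, 0, 1, 0; 0, 0, 1, 0, 1]
  let B' : Matrix (Fin 4) (Fin 4) ℚ := !![1, 0, 0, 0; 1, 1, 0, 1; 0, 1, 1, 0; 0, 0, 1, 1]
  let triangle : Matrix (Fin 3) (Fin 3) ℚ := !![1, 0, 1; 1, 1, 0; 0, 1, 1]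
  -- Vertex `3` is a leaf, and vertex `0` is a leaf of what remains without it.
  have h_leaf : B.det = B'.det := by
    have h_minor : B.submatrix (Fin.succAbove 3) (Fin.succAbove 3) = B' := by decide +kernel
    rw [det_succ_row _ 3, Fin.sum_univ_five, h_minor]
    simp [B, Even.neg_pow (by decide : Even 6)]
  have h_next_leaf : B'.det = triangle.det := by
    have h_minor : B'.submatrix Fin.succ (Fin.succAbove 0) = triangle := by decide +kernel
    rw [det_succ_row_zero, Fin.sum_univ_four, h_minor]
    simp [B']
  have h_triangle : triangle.det = 2 := by
    simp [triangle, det_fin_three, one_add_one_eq_two]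
  rw [edgeIncMatrix_submatrix_fullEdge, h_leaf, h_next_leaf, h_triangle]

theorem card_kept_over_edge (e : Edge (Fin 5)) :
    #{x : {x : Idx // x ∉ removed} | x.1.1 = e} = if e ∈ univ.map fullEdge then 3 else 2 := by
  revert e
  decide +kernel

theorem card_kept : Fintype.card {x : Idx // x ∉ removed} = 25 := by
  decide +kernel

theorem card_edge_fin_five : Fintype.card (Edge (Fin 5)) = 10 := by
  decide

/-- Removing the rows and columns of `E₁₃^α, E₁₅^α, E₂₄^α, E₃₄^α, E₄₅^α` from the
intersection matrix yields a 25×25 matrix of determinant `3²⁰` in absolute value. -/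
theorem stmt_7 :
    |(M.submatrix (Subtype.val : {x : Idx // x ∉ removed} → Idx) Subtype.val).det|
      = 3 ^ 20 := by
  let π : {x : Idx // x ∉ removed} → Edge (Fin 5) := fun x => x.1.1
  have h_full (v : Fin 5) : (#{x | π x = fullEdge v} : ℚ) = 3 := by
    simp [π, card_kept_over_edge]
  have h_rest : ∏ e ∈ (univ.map fullEdge)ᶜ, ((3 : ℚ) - #{x | π x = e}) = 1 := by
    refine prod_eq_one fun e he => ?_
    rw [card_kept_over_edge, if_neg (mem_compl.1 he)]
    norm_num
  have h_det : (scalar _ 3 - (kneserMatrix (Fin 5) ℚ).submatrix π π).det = -3 ^ 20 := by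
    have h_pow := pow_mul_det_scalar_sub_kneserMatrix_submatrix (Fin 5) ℚ π fullEdge 3 h_full
    rw [h_rest, det_edgeIncMatrix_submatrix_fullEdge, card_kept, card_edge_fin_five,
      Fintype.card_fin] at h_pow
    linarith
  rw [M_submatrix_eq_neg_scalar_sub Subtype.val_injective, det_neg, h_det, abs_mul, abs_neg_one_pow]
  norm_num
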